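/- The complete bipartite graph K_{q−1,(q−1)^{q−1}} is q-solvable for every q ≥ 2. -/

import Mathlib

/-- A directed graph (arc `u → v` meaning `v` sees `u`'s hat) is `q`-solvable if there
are guessing functions, each depending only on the hats the vertex sees, such that
every hat assignment is guessed correctly by some vertex. -/
def HatSolvable {V : Type*} (adj : V → V → Prop) (q : ℕ) : Prop :=
  ∃ f : V → ((V → Fin q) → Fin q),
    (∀ (v : V) (x y : V → Fin q), (∀ u, adj u v → x u = y u) → f v x = f v y) ∧
    ∀ x : V → Fin q, ∃ v, f v x = x v

/-!
Single out one hat colour `none` on the left. The right vertex indexed by `z` guesses the first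
left vertex `i` whose hat is `z i`, and `none` if there is no such `i`. Fix the right hats `y`, and
let `T` be the set of left hat assignments for which every right vertex guesses wrong. The left
vertices see `y`, so they win as soon as some assignment `c` agrees somewhere with each member
of `T`. If there were no such `c`, one could choose the values `z i` by recursion on a well-order so
that every possible guess of the vertex `z` is attained on `T`; but on `T` this vertex never guesses
`y z`.
-/

/-- Solvability of the hat game on the complete bipartite graph with parts `L` and `R`, where the
hats on `L` have colours in `C` and those on `R` have colours in `D`. The palettes may be infinite
and may differ, and visibility is encoded in the types of the guessing functions. -/
def BipartiteHatSolvable (L R C D : Type*) : Prop :=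
  ∃ (f : L → (R → D) → C) (g : R → (L → C) → D),
    ∀ (x : L → C) (y : R → D), (∃ i, f i y = x i) ∨ ∃ z, g z x = y z

theorem BipartiteHatSolvable.hatSolvable {L R C D : Type*} {q : ℕ}
    (h : BipartiteHatSolvable L R C D) (eC : Fin q ≃ C) (eD : Fin q ≃ D) :
    HatSolvable (fun a b : L ⊕ R => a.isLeft ≠ b.isLeft) q := by
  obtain ⟨f, g, hfg⟩ := h
  let leftHats (x : L ⊕ R → Fin q) (i : L) : C := eC (x (.inl i))
  let rightHats (x : L ⊕ R → Fin q) (z : R) : D := eD (x (.inr z))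
  refine ⟨fun v x => v.elim (fun i => eC.symm (f i (rightHats x)))
    (fun z => eD.symm (g z (leftHats x))), ?_, fun x => ?_⟩
  · rintro (i | z) x y hxy
    · have hright : rightHats x = rightHats y :=
        funext fun z => congrArg eD (hxy (.inr z) (by simp))
      simp only [Sum.elim_inl, hright]
    · have hleft : leftHats x = leftHats y :=
        funext fun i => congrArg eC (hxy (.inl i) (by simp))
      simp only [Sum.elim_inr, hleft]
  · rcases hfg (leftHats x) (rightHats x) with ⟨i, hi⟩ | ⟨z, hz⟩
    · exact ⟨.inl i, eC.symm_apply_eq.2 hi⟩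
    · exact ⟨.inr z, eD.symm_apply_eq.2 hz⟩

section FirstAgreement

variable {ι α : Type*} [LinearOrder ι] [WellFoundedLT ι]

open Classical in
/-- The first index at which `x` agrees with `z`, or `none` if they agree nowhere. This is the
guess of the right vertex indexed by `z` when it sees the left hats `x`. -/
noncomputable def firstAgreement (z : ι → α) (x : ι → Option α) : Option ι :=
  if h : ∃ i, x i = some (z i) then some (wellFounded_lt.min {i | x i = some (z i)} h) else none

theorem firstAgreement_eq_none {z : ι → α} {x : ι → Option α} (h : ∀ i, x i ≠ some (z i)) :
    firstAgreement z x = none :=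
  dif_neg (not_exists.2 h)

theorem firstAgreement_eq_some {z : ι → α} {x : ι → Option α} {i : ι}
    (hi : x i = some (z i)) (hlt : ∀ j < i, x j ≠ some (z j)) :
    firstAgreement z x = some i := by
  rw [firstAgreement, dif_pos ⟨i, hi⟩]
  exact congrArg some <| wellFounded_lt.min_eq_of_forall_not_lt (s := {j | x j = some (z j)})
    hi fun j hj hji => hlt j hji hj

theorem exists_surjOn_firstAgreement {T : Set (ι → Option α)}
    (hT : ∀ c : ι → Option α, ∃ t ∈ T, ∀ i, t i ≠ c i) :
    ∃ z : ι → α, Set.SurjOn (firstAgreement z) T Set.univ := by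
  have extend (i : ι) (z : ∀ j < i, α) :
      ∃ a, ∃ t ∈ T, t i = some a ∧ ∀ j (hj : j < i), t j ≠ some (z j hj) := by
    -- A member of `T` that avoids `none` at `i` has a value there that `z` can take.
    obtain ⟨t, htT, ht⟩ := hT fun j => if hj : j < i then some (z j hj) else none
    obtain ⟨a, ha⟩ := Option.ne_none_iff_exists'.1 (by simpa using ht i)
    exact ⟨a, t, htT, ha, fun j hj => by simpa [hj] using ht j⟩
  choose value hvalue using extend
  let z : ι → α := wellFounded_lt.fix value
  have hz (i : ι) : z i = value i fun j _ => z j := wellFounded_lt.fix_eq value i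
  refine ⟨z, fun guess _ => ?_⟩
  cases guess with
  | none =>
    obtain ⟨t, htT, ht⟩ := hT fun i => some (z i)
    exact ⟨t, htT, firstAgreement_eq_none ht⟩
  | some i =>
    obtain ⟨t, htT, hti, hlt⟩ := hvalue i fun j _ => z j
    exact ⟨t, htT, firstAgreement_eq_some (hz i ▸ hti) hlt⟩

theorem exists_agree_of_forall_firstAgreement_ne (y : (ι → α) → Option ι) :
    ∃ c : ι → Option α, ∀ x, (∀ z, firstAgreement z x ≠ y z) → ∃ i, c i = x i := by
  by_contra! hc
  obtain ⟨z, hz⟩ := exists_surjOn_firstAgreement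
    (T := {x | ∀ z, firstAgreement z x ≠ y z}) fun c =>
      let ⟨x, hx, hne⟩ := hc c
      ⟨x, hx, fun i => (hne i).symm⟩
  obtain ⟨x, hx, hxz⟩ := hz (Set.mem_univ (y z))
  exact hx z hxz

end FirstAgreement

theorem bipartite_solvable_general (ι α : Type*) :
    BipartiteHatSolvable ι (ι → α) (Option α) (Option ι) := by
  obtain ⟨_, _⟩ := exists_wellFoundedLT ι
  choose c hc using exists_agree_of_forall_firstAgreement_ne (ι := ι) (α := α)
  refine ⟨fun i y => c y i, firstAgreement, fun x y => ?_⟩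
  exact or_iff_not_imp_right.2 fun h => hc y x (not_exists.1 h)

/-- The complete bipartite graph $K_{q-1,(q-1)^{q-1}}$ is $q$-solvable. -/
theorem bipartite_solvable (q : ℕ) (hq : 2 ≤ q) :
    HatSolvable
      (fun a b : Fin (q - 1) ⊕ (Fin (q - 1) → Fin (q - 1)) => a.isLeft ≠ b.isLeft) q := by
  obtain ⟨m, rfl⟩ : ∃ m, q = m + 1 := ⟨q - 1, by lia⟩
  exact (bipartite_solvable_general (Fin m) (Fin m)).hatSolvable finSuccEquivLast finSuccEquivLast
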